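/- (2-Wasserstein distance of LMC iterates for a quadratic potential) Let f(x) = (m/2)·Σ_{i=1}^d x_i² + (L/2)·Σ_{i=d+1}^{2d} x_i² on ℝ^{2d} with 0 < m ≤ L, let μ be the probability measure on ℝ^{2d} with density proportional to exp(−f) (a Gaussian), and let (x̄_k) be the LMC iterates with step size h, 0 < h < 2/L, started from x₀ = (1,1,…,1) ∈ ℝ^{2d}. Then for every k ≥ 1: W₂²(Law(x̄_k), μ) = d(1 − mh)^{2k} + (d/m)·( √(2/(2 − mh))·√(1 − (1 − mh)^{2k}) − 1 )² + d(1 − Lh)^{2k} + (d/L)·( √(2/(2 − Lh))·√(1 − (1 − Lh)^{2k}) − 1 )². -/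

import Mathlib

open MeasureTheory ProbabilityTheory Real
open scoped ENNReal NNReal

noncomputable section

/-- `ℝ^d` with the Euclidean structure. -/
abbrev Euc (d : ℕ) := EuclideanSpace ℝ (Fin d)

/-- The standard Gaussian measure `N(0, I_d)` on `ℝ^d`. -/
noncomputable def stdGaussian (d : ℕ) : Measure (Euc d) :=
  (Measure.pi fun _ : Fin d => gaussianReal 0 1).map (EuclideanSpace.equiv (Fin d) ℝ).symm

/-- The centered Gaussian measure on `ℝ^d` with covariance `σ2 • I_d`. -/
noncomputable def isoGaussian (d : ℕ) (σ2 : ℝ) : Measure (Euc d) :=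
  (stdGaussian d).map fun x => Real.sqrt σ2 • x

/-- `B` is a standard `d`-dimensional Brownian motion with respect to the filtration `ℱ`
under the probability measure `P`. -/
structure IsStdBrownian {d : ℕ} {Ω : Type*} {mΩ : MeasurableSpace Ω} (P : Measure Ω)
    (ℱ : Filtration ℝ mΩ) (B : ℝ → Ω → Euc d) : Prop where
  init : ∀ ω, B 0 ω = 0
  cont : ∀ ω, Continuous fun t => B t ω
  adapted : StronglyAdapted ℱ B
  incr_law : ∀ s t : ℝ, 0 ≤ s → s ≤ t →
    P.map (fun ω => B t ω - B s ω) = isoGaussian d (t - s)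
  incr_indep : ∀ s t : ℝ, 0 ≤ s → s ≤ t →
    Indep (MeasurableSpace.comap (fun ω => B t ω - B s ω) inferInstance) (ℱ s) P

/-- `X` is a (pathwise) solution of the overdamped Langevin dynamics
`dX_t = -∇f(X_t) dt + √2 dB_t`: a continuous adapted process satisfying the integral
equation `X_t = X_0 - ∫₀ᵗ ∇f(X_s) ds + √2 B_t` for all `t ≥ 0`. -/
structure IsLangevinSolution {d : ℕ} {Ω : Type*} {mΩ : MeasurableSpace Ω}
    (ℱ : Filtration ℝ mΩ) (f : Euc d → ℝ) (B : ℝ → Ω → Euc d) (X : ℝ → Ω → Euc d) : Prop where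
  cont : ∀ ω, Continuous fun t => X t ω
  adapted : StronglyAdapted ℱ X
  eqn : ∀ ω, ∀ t : ℝ, 0 ≤ t →
    X t ω = X 0 ω - (∫ s in (0:ℝ)..t, gradient f (X s ω)) + Real.sqrt 2 • B t ω

/-- The Hessian bounds `m • I ≼ ∇²f(x) ≼ L • I` for all `x`, expressed through the second
iterated Fréchet derivative: `m ‖v‖² ≤ ⟨v, ∇²f(x) v⟩ ≤ L ‖v‖²`. -/
def HessianBounds {d : ℕ} (m L : ℝ) (f : Euc d → ℝ) : Prop :=
  ∀ x v : Euc d, m * ‖v‖ ^ 2 ≤ iteratedFDeriv ℝ 2 f x ![v, v] ∧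
    iteratedFDeriv ℝ 2 f x ![v, v] ≤ L * ‖v‖ ^ 2


/-- The 2-Wasserstein distance:
`W₂(μ, ν) = inf over couplings γ of (∫ ‖x - y‖² dγ)^{1/2}`, where a coupling of `μ` and `ν`
is a probability measure on the product space whose marginals are `μ` and `ν`. -/
noncomputable def W2 {α : Type*} [MeasurableSpace α] [NormedAddCommGroup α]
    (μ ν : Measure α) : ℝ :=
  Real.sqrt (ENNReal.toReal
    (⨅ γ ∈ {γ : Measure (α × α) |
        IsProbabilityMeasure γ ∧ γ.map Prod.fst = μ ∧ γ.map Prod.snd = ν},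
      ∫⁻ p, (‖p.1 - p.2‖₊ : ℝ≥0∞) ^ 2 ∂γ))

/-- `μ` is the probability measure with density proportional to `exp (-f)` with respect to
Lebesgue measure. -/
def IsGibbs {d : ℕ} (f : Euc d → ℝ) (μ : Measure (Euc d)) : Prop :=
  IsProbabilityMeasure μ ∧ ∃ c : ℝ≥0∞, c ≠ 0 ∧ c ≠ ⊤ ∧
    μ = c • (volume : Measure (Euc d)).withDensity fun x => ENNReal.ofReal (Real.exp (-f x))


/-- The quadratic potential `f(x) = (m/2) Σ_{i<d} x_i² + (L/2) Σ_{d ≤ i < 2d} x_i²` on `ℝ^{2d}`. -/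
noncomputable def fquad (d : ℕ) (m L : ℝ) : Euc (2 * d) → ℝ :=
  fun x => ∑ i : Fin (2 * d), ((if (i : ℕ) < d then m else L) / 2) * x i ^ 2

/-! For a diagonal quadratic potential the LMC step acts on each coordinate separately, so the
iterates are Gaussian with diagonal covariance, the variances being partial sums of a geometric
series; the target is Gaussian with diagonal covariance as well. For any coupling `(X, Y)` of square
integrable laws, `E ‖X - Y‖² = ∑ i, ((E Xᵢ - E Yᵢ)² + Var (Xᵢ - Yᵢ))`, and Cauchy–Schwarz for the
covariance bounds `Var (Xᵢ - Yᵢ)` below by `(√Var Xᵢ - √Var Yᵢ)²`. Driving two Gaussians with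
diagonal covariances by the same standard Gaussian vector gives equality in every coordinate. -/

section Coupling

variable {α : Type*} [MeasurableSpace α] {μ ν : Measure α} {γ : Measure (α × α)}

/-- The couplings of `μ` and `ν` over which `W2 μ ν` takes its infimum. -/
def IsCoupling (γ : Measure (α × α)) (μ ν : Measure α) : Prop :=
  IsProbabilityMeasure γ ∧ γ.map Prod.fst = μ ∧ γ.map Prod.snd = ν

lemma IsCoupling.map_prodMk {Ω : Type*} [MeasurableSpace Ω] {P : Measure Ω}
    [IsProbabilityMeasure P] {X Y : Ω → α} (hX : Measurable X) (hY : Measurable Y) :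
    IsCoupling (P.map fun ω => (X ω, Y ω)) (P.map X) (P.map Y) :=
  ⟨Measure.isProbabilityMeasure_map (hX.prodMk hY).aemeasurable,
    Measure.map_map measurable_fst (hX.prodMk hY), Measure.map_map measurable_snd (hX.prodMk hY)⟩

lemma IsCoupling.W2_sq_eq_of_forall_le [NormedAddCommGroup α] (hγ : IsCoupling γ μ ν)
    (hmin : ∀ γ', IsCoupling γ' μ ν →
      ∫⁻ p, (‖p.1 - p.2‖₊ : ℝ≥0∞) ^ 2 ∂γ ≤ ∫⁻ p, (‖p.1 - p.2‖₊ : ℝ≥0∞) ^ 2 ∂γ') :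
    W2 μ ν ^ 2 = (∫⁻ p, (‖p.1 - p.2‖₊ : ℝ≥0∞) ^ 2 ∂γ).toReal := by
  rw [W2, Real.sq_sqrt ENNReal.toReal_nonneg]
  exact congrArg ENNReal.toReal (le_antisymm (iInf₂_le γ hγ) (le_iInf₂ hmin))

end Coupling

section SecondMoment

variable {Ω : Type*} [MeasurableSpace Ω] {P : Measure Ω} [IsProbabilityMeasure P]

lemma covariance_sq_le_variance_mul_variance {X Y : Ω → ℝ} (hX : MemLp X 2 P)
    (hY : MemLp Y 2 P) : cov[X, Y; P] ^ 2 ≤ Var[X; P] * Var[Y; P] := by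
  have variance_nonneg_line (t : ℝ) :
      0 ≤ Var[Y; P] * (t * t) + 2 * cov[X, Y; P] * t + Var[X; P] := by
    have h := variance_nonneg (X + t • Y) P
    rw [variance_add hX (hY.const_smul t), covariance_smul_right, variance_smul] at h
    linarith
  have := discrim_le_zero variance_nonneg_line
  rw [discrim] at this
  linarith

lemma sq_sqrt_variance_sub_le_variance_sub {X Y : Ω → ℝ} (hX : MemLp X 2 P) (hY : MemLp Y 2 P) :
    (√Var[X; P] - √Var[Y; P]) ^ 2 ≤ Var[fun ω => X ω - Y ω; P] := by
  have hcov : cov[X, Y; P] ≤ √Var[X; P] * √Var[Y; P] := by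
    rw [← Real.sqrt_mul (variance_nonneg X P)]
    exact Real.le_sqrt_of_sq_le (covariance_sq_le_variance_mul_variance hX hY)
  rw [variance_fun_sub hX hY, sub_sq, Real.sq_sqrt (variance_nonneg X P),
    Real.sq_sqrt (variance_nonneg Y P)]
  linarith

variable {ι : Type*} [Fintype ι]

lemma lintegral_nnnorm_sq_eq {Z : Ω → EuclideanSpace ℝ ι} (hZ : ∀ i, MemLp (fun ω => Z ω i) 2 P) :
    ∫⁻ ω, (‖Z ω‖₊ : ℝ≥0∞) ^ 2 ∂P =
      ENNReal.ofReal (∑ i, (P[fun ω => Z ω i] ^ 2 + Var[fun ω => Z ω i; P])) := by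
  have hint (i : ι) : Integrable (fun ω => Z ω i ^ 2) P := (hZ i).integrable_sq
  calc ∫⁻ ω, (‖Z ω‖₊ : ℝ≥0∞) ^ 2 ∂P
      = ∫⁻ ω, ENNReal.ofReal (∑ i, Z ω i ^ 2) ∂P := by
        refine lintegral_congr fun ω => ?_
        rw [← EuclideanSpace.real_norm_sq_eq, ENNReal.ofReal_pow (norm_nonneg _),
          ofReal_norm, enorm_eq_nnnorm]
    _ = ENNReal.ofReal (∫ ω, ∑ i, Z ω i ^ 2 ∂P) :=
        (ofReal_integral_eq_lintegral_ofReal (integrable_finsetSum _ fun i _ => hint i)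
          (.of_forall fun ω => Finset.sum_nonneg fun i _ => sq_nonneg _)).symm
    _ = ENNReal.ofReal (∑ i, (P[fun ω => Z ω i] ^ 2 + Var[fun ω => Z ω i; P])) := by
        rw [integral_finsetSum _ fun i _ => hint i]
        simp [variance_eq_sub (hZ _)]

lemma IsCoupling.ofReal_sum_le_lintegral {μ ν : Measure (EuclideanSpace ℝ ι)}
    {γ : Measure (EuclideanSpace ℝ ι × EuclideanSpace ℝ ι)} (hγ : IsCoupling γ μ ν)
    (hμ : ∀ i, MemLp (fun x : EuclideanSpace ℝ ι => x i) 2 μ)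
    (hν : ∀ i, MemLp (fun x : EuclideanSpace ℝ ι => x i) 2 ν) :
    ENNReal.ofReal (∑ i, ((μ[fun x => x i] - ν[fun x => x i]) ^ 2 +
      (√Var[fun x => x i; μ] - √Var[fun x => x i; ν]) ^ 2)) ≤
      ∫⁻ p, (‖p.1 - p.2‖₊ : ℝ≥0∞) ^ 2 ∂γ := by
  obtain ⟨_, rfl, rfl⟩ := hγ
  have hfst (i : ι) : MemLp (fun p : EuclideanSpace ℝ ι × EuclideanSpace ℝ ι => p.1 i) 2 γ :=
    (hμ i).comp_of_map (by fun_prop)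
  have hsnd (i : ι) : MemLp (fun p : EuclideanSpace ℝ ι × EuclideanSpace ℝ ι => p.2 i) 2 γ :=
    (hν i).comp_of_map (by fun_prop)
  rw [lintegral_nnnorm_sq_eq fun i => (hfst i).sub (hsnd i)]
  refine ENNReal.ofReal_le_ofReal (Finset.sum_le_sum fun i _ => ?_)
  rw [integral_map (by fun_prop) (by fun_prop), integral_map (by fun_prop) (by fun_prop),
    variance_map (by fun_prop) (by fun_prop), variance_map (by fun_prop) (by fun_prop),
    ← integral_sub ((hfst i).integrable one_le_two) ((hsnd i).integrable one_le_two)]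
  exact add_le_add_right (sq_sqrt_variance_sub_le_variance_sub (hfst i) (hsnd i)) _

end SecondMoment

section DiagonalGaussian

open Matrix
open scoped MatrixOrder

variable {ι : Type*} [Fintype ι] [DecidableEq ι] {m m' : EuclideanSpace ℝ ι}

lemma toEuclideanCLM_diagonal_apply (v : ι → ℝ) (x : EuclideanSpace ℝ ι) (i : ι) :
    toEuclideanCLM (𝕜 := ℝ) (diagonal v) x i = v i * x i := by
  simp [mulVec_diagonal]

lemma sqrt_diagonal {v : ι → ℝ} (hv : 0 ≤ v) :
    CFC.sqrt (diagonal v) = diagonal fun i => √(v i) := by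
  refine CFC.sqrt_unique ?_ (PosSemidef.diagonal fun i => Real.sqrt_nonneg (v i)).nonneg
  simp only [diagonal_mul_diagonal, Real.mul_self_sqrt (hv _)]

lemma memLp_eval_multivariateGaussian (S : Matrix ι ι ℝ) (i : ι) :
    MemLp (fun x => x i) 2 (multivariateGaussian m S) :=
  IsGaussian.memLp_two_id.eval_piLp i

lemma integral_eval_multivariateGaussian (S : Matrix ι ι ℝ) (i : ι) :
    (multivariateGaussian m S)[fun x => x i] = m i := by
  rw [← eval_integral_piLp fun j =>
    (memLp_eval_multivariateGaussian S j).integrable one_le_two, integral_id_multivariateGaussian]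

lemma lintegral_nnnorm_sq_add_diagonal_stdGaussian (c : EuclideanSpace ℝ ι) (s : ι → ℝ) :
    ∫⁻ z, (‖c + toEuclideanCLM (𝕜 := ℝ) (diagonal s) z‖₊ : ℝ≥0∞) ^ 2
        ∂ProbabilityTheory.stdGaussian (EuclideanSpace ℝ ι) =
      ENNReal.ofReal (∑ i, (c i ^ 2 + s i ^ 2)) := by
  rw [← multivariateGaussian_zero_one]
  have hz (i : ι) := memLp_eval_multivariateGaussian (m := 0) (1 : Matrix ι ι ℝ) i
  have hcoord (i : ι) : (fun z => (c + toEuclideanCLM (𝕜 := ℝ) (diagonal s) z) i) =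
      fun z => c i + s i * z i := by
    funext z
    rw [PiLp.add_apply, toEuclideanCLM_diagonal_apply]
  have hmean (i : ι) : (multivariateGaussian 0 (1 : Matrix ι ι ℝ))[fun z => c i + s i * z i] =
      c i := by
    rw [integral_add (integrable_const _) (((hz i).integrable one_le_two).const_mul _),
      integral_const_mul, integral_eval_multivariateGaussian]
    simp
  have hvar (i : ι) : Var[fun z => c i + s i * z i; multivariateGaussian 0 (1 : Matrix ι ι ℝ)] =
      s i ^ 2 := by
    rw [variance_const_add (by fun_prop), variance_const_mul,
      variance_eval_multivariateGaussian PosSemidef.one, one_apply_eq, mul_one]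
  rw [lintegral_nnnorm_sq_eq fun i => by
    rw [hcoord]; exact (memLp_const (c i)).add ((hz i).const_mul (s i))]
  simp only [hcoord, hmean, hvar]

/-- The synchronous coupling `z ↦ (m + √v z, m' + √w z)` is optimal: it attains the lower bound
of `IsCoupling.ofReal_sum_le_lintegral`. -/
theorem W2_sq_multivariateGaussian_diagonal (m m' : EuclideanSpace ℝ ι) {v w : ι → ℝ}
    (hv : 0 ≤ v) (hw : 0 ≤ w) :
    W2 (multivariateGaussian m (diagonal v)) (multivariateGaussian m' (diagonal w)) ^ 2 =
      ∑ i, ((m i - m' i) ^ 2 + (√(v i) - √(w i)) ^ 2) := by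
  let γ := (ProbabilityTheory.stdGaussian (EuclideanSpace ℝ ι)).map fun z =>
    (m + toEuclideanCLM (𝕜 := ℝ) (CFC.sqrt (diagonal v)) z,
      m' + toEuclideanCLM (𝕜 := ℝ) (CFC.sqrt (diagonal w)) z)
  have hγ : IsCoupling γ (multivariateGaussian m (diagonal v))
      (multivariateGaussian m' (diagonal w)) := .map_prodMk (by fun_prop) (by fun_prop)
  have hcost : ∫⁻ p, (‖p.1 - p.2‖₊ : ℝ≥0∞) ^ 2 ∂γ =
      ENNReal.ofReal (∑ i, ((m i - m' i) ^ 2 + (√(v i) - √(w i)) ^ 2)) := by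
    rw [lintegral_map (by fun_prop) (by fun_prop), sqrt_diagonal hv, sqrt_diagonal hw]
    simp_rw [add_sub_add_comm, ← _root_.sub_apply, ← map_sub, diagonal_sub]
    exact lintegral_nnnorm_sq_add_diagonal_stdGaussian (m - m') _
  rw [hγ.W2_sq_eq_of_forall_le, hcost, ENNReal.toReal_ofReal (by positivity)]
  intro γ' hγ'
  have := hγ'.ofReal_sum_le_lintegral (memLp_eval_multivariateGaussian _)
    (memLp_eval_multivariateGaussian _)
  simp only [integral_eval_multivariateGaussian,
    variance_eval_multivariateGaussian (PosSemidef.diagonal hv),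
    variance_eval_multivariateGaussian (PosSemidef.diagonal hw), diagonal_apply_eq] at this
  rwa [hcost]

lemma map_toEuclideanCLM_multivariateGaussian {S : Matrix ι ι ℝ} (hS : S.PosSemidef)
    (A : Matrix ι ι ℝ) :
    (multivariateGaussian m S).map (toEuclideanCLM (𝕜 := ℝ) A) =
      multivariateGaussian (toEuclideanCLM (𝕜 := ℝ) A m) (A * S * Aᴴ) := by
  refine IsGaussian.ext ?_ ?_
  · simp only [id_eq]
    rw [ContinuousLinearMap.integral_id_map IsGaussian.integrable_id,
      integral_id_multivariateGaussian, integral_id_multivariateGaussian]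
  · ext x y
    rw [covarianceBilin_map IsGaussian.memLp_two_id, covarianceBilin_multivariateGaussian hS,
      covarianceBilin_multivariateGaussian (hS.mul_mul_conjTranspose_same A),
      ← ContinuousLinearMap.star_eq_adjoint, ← map_star, star_eq_conjTranspose,
      conjTranspose_eq_transpose_of_trivial, ofLp_toEuclideanCLM, ofLp_toEuclideanCLM,
      mulVec_transpose, ← dotProduct_mulVec, mulVec_mulVec, mulVec_mulVec, mul_assoc]

lemma map_add_multivariateGaussian {Ω : Type*} [MeasurableSpace Ω] {P : Measure Ω}
    {X Y : Ω → EuclideanSpace ℝ ι} (hX : AEMeasurable X P) (hY : AEMeasurable Y P)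
    (hXY : IndepFun X Y P) {S T : Matrix ι ι ℝ} (hS : S.PosSemidef) (hT : T.PosSemidef)
    (hXlaw : P.map X = multivariateGaussian m S) (hYlaw : P.map Y = multivariateGaussian m' T) :
    P.map (fun ω => X ω + Y ω) = multivariateGaussian (m + m') (S + T) := by
  have : IsFiniteMeasure P := by
    have : IsFiniteMeasure (P.map X) := hXlaw ▸ inferInstance
    exact Measure.isFiniteMeasure_of_map hX
  refine Measure.ext_of_charFun ?_
  rw [hXY.charFun_map_fun_add_eq_mul hX hY, hXlaw, hYlaw]
  ext t
  rw [Pi.mul_apply, charFun_multivariateGaussian hS, charFun_multivariateGaussian hT,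
    charFun_multivariateGaussian (hS.add hT), ← Complex.exp_add, add_mulVec, dotProduct_add,
    inner_add_right]
  push_cast
  ring_nf

lemma multivariateGaussian_diagonal_eq_map_pi (m : EuclideanSpace ℝ ι) (v : ι → ℝ≥0) :
    multivariateGaussian m (diagonal fun i => (v i : ℝ)) =
      (Measure.pi fun i => gaussianReal (m i) (v i)).map (WithLp.toLp 2) := by
  refine Measure.ext_of_charFun ?_
  ext t
  rw [charFun_multivariateGaussian (PosSemidef.diagonal fun i => (v i).coe_nonneg), charFun_pi]
  simp_rw [charFun_gaussianReal, ← Complex.exp_sum, Finset.sum_sub_distrib]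
  rw [PiLp.inner_apply, dotProduct]
  simp_rw [mulVec_diagonal]
  push_cast [Finset.sum_mul, Finset.sum_div]
  congr 2 <;> refine Finset.sum_congr rfl fun i _ => ?_
  · simp [mul_comm]
  · ring

end DiagonalGaussian

section DiagonalQuadratic

variable {ι : Type*} [Fintype ι]

/-- The quadratic potential with curvature `a i` along the `i`-th coordinate axis; `fquad d m L`
is definitionally the case where `a` takes the value `m` on the first `d` indices and `L` on the
others. -/
def diagonalQuadratic (a : ι → ℝ) (x : EuclideanSpace ℝ ι) : ℝ := ∑ i, a i / 2 * x i ^ 2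

lemma measurable_diagonalQuadratic (a : ι → ℝ) : Measurable (diagonalQuadratic a) := by
  unfold diagonalQuadratic
  fun_prop

lemma gradient_diagonalQuadratic (a : ι → ℝ) (x : EuclideanSpace ℝ ι) :
    gradient (diagonalQuadratic a) x = WithLp.toLp 2 fun i => a i * x i := by
  refine HasGradientAt.gradient (hasGradientAt_iff_hasFDerivAt.2 ?_)
  have hterm (i : ι) : HasFDerivAt (fun y : EuclideanSpace ℝ ι => a i / 2 * y i ^ 2)
      ((a i * x i) • EuclideanSpace.proj i : EuclideanSpace ℝ ι →L[ℝ] ℝ) x := by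
    refine (((EuclideanSpace.proj (𝕜 := ℝ) i).hasFDerivAt.pow 2).const_mul (a i / 2)).congr_fderiv
      (ContinuousLinearMap.ext fun v => ?_)
    simp only [PiLp.proj_apply, Nat.add_one_sub_one, pow_one, nsmul_eq_mul, Nat.cast_ofNat,
      _root_.smul_apply, smul_eq_mul]
    ring
  refine (HasFDerivAt.fun_sum fun i _ => hterm i).congr_fderiv (ContinuousLinearMap.ext fun v => ?_)
  simp [PiLp.inner_apply, mul_comm]

end DiagonalQuadratic

section Gibbs

open Matrix

lemma map_withDensity_comp_of_measurePreserving {α β : Type*} [MeasurableSpace α]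
    [MeasurableSpace β] {μ : Measure α} {ν : Measure β} {φ : α → β} (hφ : MeasurePreserving φ μ ν)
    {g : β → ℝ≥0∞} (hg : Measurable g) :
    (μ.withDensity fun x => g (φ x)).map φ = ν.withDensity g := by
  ext s hs
  rw [Measure.map_apply hφ.measurable hs, withDensity_apply _ (hφ.measurable hs),
    withDensity_apply _ hs, hφ.setLIntegral_comp_preimage hs hg]

variable {ι : Type*} [Fintype ι]

lemma pi_withDensity_ofReal {α : ι → Type*} [∀ i, MeasurableSpace (α i)]
    {μ : ∀ i, Measure (α i)} [∀ i, SigmaFinite (μ i)] {f : ∀ i, α i → ℝ}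
    (hf : ∀ i, Integrable (f i) (μ i)) (hf0 : ∀ i x, 0 ≤ f i x) :
    Measure.pi (fun i => (μ i).withDensity fun x => ENNReal.ofReal (f i x)) =
      (Measure.pi μ).withDensity fun x => ENNReal.ofReal (∏ i, f i (x i)) := by
  refine Measure.pi_eq fun s hs => ?_
  have hbox := MeasurableSet.univ_pi hs
  have hind0 (i : ι) (x : α i) : 0 ≤ (s i).indicator (f i) x :=
    Set.indicator_nonneg (fun y _ => hf0 i y) x
  have indicator_box : ((Set.univ.pi s).indicator fun x => ENNReal.ofReal (∏ i, f i (x i))) =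
      fun x => ENNReal.ofReal (∏ i, (s i).indicator (f i) (x i)) := by
    classical
    ext x
    simp only [Set.indicator_apply, Set.mem_univ_pi, Finset.prod_ite_zero, Finset.mem_univ,
      true_imp_iff]
    split_ifs <;> simp
  calc (Measure.pi μ).withDensity (fun x => ENNReal.ofReal (∏ i, f i (x i))) (Set.univ.pi s)
      = ∫⁻ x, ENNReal.ofReal (∏ i, (s i).indicator (f i) (x i)) ∂Measure.pi μ := by
        rw [withDensity_apply _ hbox, ← lintegral_indicator hbox, indicator_box]
    _ = ENNReal.ofReal (∏ i, ∫ x, (s i).indicator (f i) x ∂μ i) := by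
        rw [← integral_fintype_prod_eq_prod, ofReal_integral_eq_lintegral_ofReal
          (Integrable.fintype_prod_dep fun i => (hf i).indicator (hs i))
          (.of_forall fun x => Finset.prod_nonneg fun i _ => hind0 i _)]
    _ = ∏ i, (μ i).withDensity (fun x => ENNReal.ofReal (f i x)) (s i) := by
        rw [ENNReal.ofReal_prod_of_nonneg fun i _ => integral_nonneg (hind0 i)]
        refine Finset.prod_congr rfl fun i _ => ?_
        rw [integral_indicator (hs i), withDensity_apply _ (hs i),
          ofReal_integral_eq_lintegral_ofReal (hf i).restrict (.of_forall (hf0 i))]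

lemma gaussianPDFReal_zero_inv {a : ℝ} (ha : 0 < a) (x : ℝ) :
    gaussianPDFReal 0 a⁻¹.toNNReal x = (√(2 * π * a⁻¹))⁻¹ * rexp (-(a / 2 * x ^ 2)) := by
  rw [gaussianPDFReal, Real.coe_toNNReal _ (inv_nonneg.2 ha.le)]
  congr 2
  field_simp
  ring

lemma multivariateGaussian_diagonal_inv_eq_withDensity [DecidableEq ι] {a : ι → ℝ}
    (ha : ∀ i, 0 < a i) :
    multivariateGaussian 0 (diagonal fun i => (a i)⁻¹) =
      ENNReal.ofReal (∏ i, (√(2 * π * (a i)⁻¹))⁻¹) •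
        volume.withDensity fun x => ENNReal.ofReal (rexp (-diagonalQuadratic a x)) := by
  have hmeas := measurable_diagonalQuadratic a
  have hcoe : (fun i => (a i)⁻¹) = fun i => ((a i)⁻¹.toNNReal : ℝ) :=
    funext fun i => (Real.coe_toNNReal _ (inv_nonneg.2 (ha i).le)).symm
  have hvar (i : ι) : (a i)⁻¹.toNNReal ≠ 0 := (Real.toNNReal_pos.2 (inv_pos.2 (ha i))).ne'
  have prod_pdf (x : ι → ℝ) : ∏ i, gaussianPDFReal 0 (a i)⁻¹.toNNReal (x i) =
      (∏ i, (√(2 * π * (a i)⁻¹))⁻¹) * rexp (-diagonalQuadratic a (WithLp.toLp 2 x)) := by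
    simp_rw [gaussianPDFReal_zero_inv (ha _), Finset.prod_mul_distrib, ← Real.exp_sum,
      Finset.sum_neg_distrib, diagonalQuadratic]
  rw [← withDensity_smul _ (by fun_prop),
    ← map_withDensity_comp_of_measurePreserving (PiLp.volume_preserving_toLp ι) (by fun_prop),
    hcoe, multivariateGaussian_diagonal_eq_map_pi]
  simp_rw [PiLp.zero_apply, gaussianReal_of_var_ne_zero 0 (hvar _), gaussianPDF_def]
  rw [pi_withDensity_ofReal (fun i => integrable_gaussianPDFReal 0 _)
    fun i => gaussianPDFReal_nonneg 0 _, ← volume_pi]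
  simp_rw [prod_pdf, Pi.smul_apply, smul_eq_mul]
  congr! with x
  exact ENNReal.ofReal_mul (by positivity)

lemma IsGibbs.unique {n : ℕ} {f : Euc n → ℝ} {μ ν : Measure (Euc n)} (hμ : IsGibbs f μ)
    (hν : IsGibbs f ν) : μ = ν := by
  obtain ⟨hμ_prob, c, -, -, hc⟩ := hμ
  obtain ⟨hν_prob, c', -, -, hc'⟩ := hν
  have hμ_univ := hμ_prob.measure_univ
  have hν_univ := hν_prob.measure_univ
  rw [hc, Measure.smul_apply, smul_eq_mul] at hμ_univ
  rw [hc', Measure.smul_apply, smul_eq_mul] at hν_univ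
  rw [hc, hc', ENNReal.eq_inv_of_mul_eq_one_left hμ_univ, ENNReal.eq_inv_of_mul_eq_one_left hν_univ]

lemma isGibbs_diagonalQuadratic_multivariateGaussian {n : ℕ} {a : Fin n → ℝ} (ha : ∀ i, 0 < a i) :
    IsGibbs (diagonalQuadratic a) (multivariateGaussian 0 (diagonal fun i => (a i)⁻¹)) := by
  refine ⟨inferInstance, _, ?_, ENNReal.ofReal_ne_top,
    multivariateGaussian_diagonal_inv_eq_withDensity ha⟩
  refine (ENNReal.ofReal_pos.2 (Finset.prod_pos fun i _ => ?_)).ne'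
  have := ha i
  positivity

end Gibbs

section Independence

variable {Ω E : Type*} {mΩ : MeasurableSpace Ω} {P : Measure Ω} [NormedAddCommGroup E]
  [MeasurableSpace E] [BorelSpace E] {ξ X : ℕ → Ω → E} {F : E → E → E} {x₀ : E}

lemma measurable_natural_of_recursion (hξ : ∀ k, StronglyMeasurable (ξ k))
    (hF : Measurable (Function.uncurry F)) (hX0 : X 0 = fun _ => x₀)
    (hX : ∀ k, X (k + 1) = fun ω => F (X k ω) (ξ (k + 1) ω)) (k : ℕ) :
    Measurable[Filtration.natural ξ hξ k] (X k) := by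
  induction k with
  | zero => exact hX0 ▸ measurable_const
  | succ k ih =>
    rw [hX]
    have hξk := (Filtration.stronglyAdapted_natural hξ (k + 1)).measurable
    have hXk := ih.mono ((Filtration.natural ξ hξ).mono k.le_succ) le_rfl
    exact hF.comp (hXk.prodMk hξk)

lemma indepFun_of_recursion (hξ : ∀ k, StronglyMeasurable (ξ k)) (hindep : iIndepFun ξ P)
    (hF : Measurable (Function.uncurry F)) (hX0 : X 0 = fun _ => x₀)
    (hX : ∀ k, X (k + 1) = fun ω => F (X k ω) (ξ (k + 1) ω)) (k : ℕ) :
    IndepFun (X k) (ξ (k + 1)) P :=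
  (indep_of_indep_of_le_right (hindep.indep_comap_natural_of_lt hξ k.lt_succ_self)
    (measurable_natural_of_recursion hξ hF hX0 hX k).comap_le).symm

end Independence

section LMCVariance

/-- The variance at step `k` of the one-dimensional recursion `x ↦ (1 - a * h) * x + √(2 * h) * z`
driven by standard Gaussian noise and started from a point: the LMC variance in a coordinate of
curvature `a`. -/
def lmcVariance (a h : ℝ) (k : ℕ) : ℝ := 2 * h * ∑ j ∈ Finset.range k, ((1 - a * h) ^ 2) ^ j

variable {a h : ℝ}

lemma lmcVariance_zero (a h : ℝ) : lmcVariance a h 0 = 0 := by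
  rw [lmcVariance, Finset.sum_range_zero, mul_zero]

lemma lmcVariance_succ (a h : ℝ) (k : ℕ) :
    lmcVariance a h (k + 1) = (1 - a * h) ^ 2 * lmcVariance a h k + 2 * h := by
  rw [lmcVariance, lmcVariance, geom_sum_succ]
  ring

lemma lmcVariance_nonneg (a : ℝ) (hh : 0 ≤ h) (k : ℕ) : 0 ≤ lmcVariance a h k := by
  unfold lmcVariance
  positivity

lemma lmcVariance_eq_div (ha : a ≠ 0) (hah : a * h ≠ 2) (k : ℕ) :
    lmcVariance a h k = 2 / (2 - a * h) * (1 - (1 - a * h) ^ (2 * k)) / a := by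
  have h2 : 2 - a * h ≠ 0 := sub_ne_zero.2 hah.symm
  rw [pow_mul, ← geom_sum_mul_neg, lmcVariance, eq_div_iff ha, div_mul_eq_mul_div, eq_div_iff h2]
  ring

lemma sq_sqrt_lmcVariance_sub_sqrt_inv (ha : 0 < a) (hah : a * h < 2) (k : ℕ) :
    (√(lmcVariance a h k) - √a⁻¹) ^ 2 =
      1 / a * (√(2 / (2 - a * h)) * √(1 - (1 - a * h) ^ (2 * k)) - 1) ^ 2 := by
  have h2 : 0 ≤ 2 / (2 - a * h) := div_nonneg zero_le_two (sub_nonneg.2 hah.le)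
  rw [lmcVariance_eq_div ha.ne' hah.ne, div_eq_mul_inv, Real.sqrt_mul' _ (inv_nonneg.2 ha.le),
    Real.sqrt_mul h2, ← sub_one_mul, mul_pow, Real.sq_sqrt (inv_nonneg.2 ha.le)]
  ring

end LMCVariance

section LMCLaw

open Matrix

lemma stdGaussian_eq_stdGaussian_euc (n : ℕ) :
    _root_.stdGaussian n = ProbabilityTheory.stdGaussian (Euc n) :=
  map_pi_eq_stdGaussian

variable {ι : Type*} [Fintype ι] [DecidableEq ι]

lemma multivariateGaussian_zero_right (m : EuclideanSpace ℝ ι) :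
    multivariateGaussian m 0 = Measure.dirac m := by
  simp [multivariateGaussian]

lemma lmc_step_eq_toEuclideanCLM_add (a : ι → ℝ) (h : ℝ) (x z : EuclideanSpace ℝ ι) :
    x - h • gradient (diagonalQuadratic a) x + √(2 * h) • z =
      toEuclideanCLM (𝕜 := ℝ) (diagonal fun i => 1 - a i * h) x +
        toEuclideanCLM (𝕜 := ℝ) (diagonal fun _ => √(2 * h)) z := by
  ext i
  simp only [gradient_diagonalQuadratic, PiLp.add_apply, PiLp.sub_apply, PiLp.smul_apply,
    smul_eq_mul, toEuclideanCLM_diagonal_apply]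
  ring

variable {Ω : Type*} {mΩ : MeasurableSpace Ω} {P : Measure Ω}

lemma map_toEuclideanCLM_add_toEuclideanCLM {X Z : Ω → EuclideanSpace ℝ ι}
    {m : EuclideanSpace ℝ ι} {S : Matrix ι ι ℝ} (hX : Measurable X) (hZ : Measurable Z)
    (hXZ : IndepFun X Z P) (hS : S.PosSemidef) (hXlaw : P.map X = multivariateGaussian m S)
    (hZlaw : P.map Z = ProbabilityTheory.stdGaussian (EuclideanSpace ℝ ι)) (A B : Matrix ι ι ℝ) :
    P.map (fun ω => toEuclideanCLM (𝕜 := ℝ) A (X ω) + toEuclideanCLM (𝕜 := ℝ) B (Z ω)) =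
      multivariateGaussian (toEuclideanCLM (𝕜 := ℝ) A m) (A * S * Aᴴ + B * Bᴴ) := by
  have hA : Measurable (toEuclideanCLM (𝕜 := ℝ) A) := by fun_prop
  have hB : Measurable (toEuclideanCLM (𝕜 := ℝ) B) := by fun_prop
  have map_AX := map_toEuclideanCLM_multivariateGaussian (m := m) hS A
  rw [← hXlaw, Measure.map_map hA hX] at map_AX
  have map_BZ := map_toEuclideanCLM_multivariateGaussian (m := 0) PosSemidef.one B
  rw [multivariateGaussian_zero_one, ← hZlaw, Measure.map_map hB hZ, map_zero, mul_one] at map_BZ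
  simpa only [add_zero, Function.comp_apply] using
    map_add_multivariateGaussian (hA.comp hX).aemeasurable (hB.comp hZ).aemeasurable
      (hXZ.comp hA hB) (hS.mul_mul_conjTranspose_same A) (posSemidef_self_mul_conjTranspose B)
      map_AX map_BZ

theorem map_lmc_diagonalQuadratic [IsProbabilityMeasure P] {a : ι → ℝ} {h : ℝ}
    {x₀ : EuclideanSpace ℝ ι} {ξ X : ℕ → Ω → EuclideanSpace ℝ ι} (hh : 0 ≤ h)
    (hξ : ∀ k, Measurable (ξ k))
    (hξlaw : ∀ k, P.map (ξ k) = ProbabilityTheory.stdGaussian (EuclideanSpace ℝ ι))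
    (hindep : iIndepFun ξ P) (hX0 : X 0 = fun _ => x₀)
    (hX : ∀ k, X (k + 1) = fun ω =>
      X k ω - h • gradient (diagonalQuadratic a) (X k ω) + √(2 * h) • ξ (k + 1) ω) (k : ℕ) :
    P.map (X k) = multivariateGaussian (WithLp.toLp 2 fun i => (1 - a i * h) ^ k * x₀ i)
      (diagonal fun i => lmcVariance (a i) h k) := by
  simp only [lmc_step_eq_toEuclideanCLM_add] at hX
  induction k with
  | zero =>
    simp only [hX0, Measure.map_const, measure_univ, one_smul, lmcVariance_zero, diagonal_zero,
      multivariateGaussian_zero_right, pow_zero, one_mul, WithLp.toLp_ofLp]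
  | succ k ih =>
    have hξ' (k : ℕ) := (hξ k).stronglyMeasurable
    have hF : Measurable (Function.uncurry fun x z : EuclideanSpace ℝ ι =>
        toEuclideanCLM (𝕜 := ℝ) (diagonal fun i => 1 - a i * h) x +
          toEuclideanCLM (𝕜 := ℝ) (diagonal fun _ => √(2 * h)) z) := by
      unfold Function.uncurry
      fun_prop
    have hXk : Measurable (X k) :=
      (measurable_natural_of_recursion hξ' hF hX0 hX k).mono (Filtration.le _ k) le_rfl
    have hcov : (diagonal fun i => lmcVariance (a i) h k).PosSemidef :=
      .diagonal fun i => lmcVariance_nonneg (a i) hh k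
    rw [hX, map_toEuclideanCLM_add_toEuclideanCLM hXk (hξ _)
      (indepFun_of_recursion hξ' hindep hF hX0 hX k) hcov ih (hξlaw _)]
    congr 1
    · ext i
      simp only [toEuclideanCLM_diagonal_apply, pow_succ', mul_assoc]
    · simp only [diagonal_conjTranspose, star_trivial, diagonal_mul_diagonal, diagonal_add,
        Real.mul_self_sqrt (mul_nonneg zero_le_two hh), lmcVariance_succ]
      congr! 2 with i
      ring

end LMCLaw

lemma sum_comp_ite_val_lt {α M : Type*} [AddCommMonoid M] {n d : ℕ} (hd : d ≤ n) (F : α → M)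
    (a b : α) : ∑ i : Fin n, F (if (i : ℕ) < d then a else b) = d • F a + (n - d) • F b := by
  simp_rw [apply_ite F, Finset.sum_ite, Finset.sum_const, Finset.filter_not]
  rw [Finset.card_sdiff_of_subset (Finset.filter_subset _ _), Fin.card_filter_val_lt,
    Finset.card_univ, Fintype.card_fin, min_eq_right hd]

theorem lmc_quadratic_w2_formula_general {n : ℕ} {Ω : Type*} {mΩ : MeasurableSpace Ω}
    {P : Measure Ω} [IsProbabilityMeasure P] {a : Fin n → ℝ} (ha : ∀ i, 0 < a i)
    {μ : Measure (Euc n)} (hμ : IsGibbs (diagonalQuadratic a) μ)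
    {h : ℝ} (hh : 0 ≤ h) (hah : ∀ i, a i * h < 2)
    {ξ : ℕ → Ω → Euc n} (hξmeas : ∀ k, Measurable (ξ k))
    (hξlaw : ∀ k, P.map (ξ k) = _root_.stdGaussian n) (hindep : iIndepFun ξ P)
    {X : ℕ → Ω → Euc n} {x₀ : Euc n} (hX0 : X 0 = fun _ => x₀)
    (hX : ∀ k, X (k + 1) = fun ω =>
      X k ω - h • gradient (diagonalQuadratic a) (X k ω) + √(2 * h) • ξ (k + 1) ω) (k : ℕ) :
    W2 (P.map (X k)) μ ^ 2 = ∑ i, ((1 - a i * h) ^ (2 * k) * x₀ i ^ 2 +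
      1 / a i * (√(2 / (2 - a i * h)) * √(1 - (1 - a i * h) ^ (2 * k)) - 1) ^ 2) := by
  simp only [stdGaussian_eq_stdGaussian_euc] at hξlaw
  rw [map_lmc_diagonalQuadratic hh hξmeas hξlaw hindep hX0 hX k,
    hμ.unique (isGibbs_diagonalQuadratic_multivariateGaussian ha),
    W2_sq_multivariateGaussian_diagonal _ _ (fun i => lmcVariance_nonneg (a i) hh k)
      fun i => inv_nonneg.2 (ha i).le]
  refine Finset.sum_congr rfl fun i _ => ?_
  rw [sq_sqrt_lmcVariance_sub_sqrt_inv (ha i) (hah i), PiLp.zero_apply, sub_zero, mul_pow,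
    ← pow_mul, mul_comm k 2]

/-- **2-Wasserstein distance of the LMC iterates for a quadratic potential.**
For `f(x) = (m/2) Σ_{i<d} x_i² + (L/2) Σ_{d≤i<2d} x_i²` with `0 < m ≤ L`, the Gaussian target
`μ ∝ exp (-f)`, step size `0 < h < 2/L`, and initial point `x₀ = (1, …, 1)`, one has for all
`k ≥ 1` the exact formula for `W₂²(Law(x̄_k), μ)`. -/
theorem lmc_quadratic_w2_formula
    {d : ℕ} {Ω : Type*} {mΩ : MeasurableSpace Ω} {P : Measure Ω} [IsProbabilityMeasure P]
    {m L : ℝ} (hm : 0 < m) (hmL : m ≤ L)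
    {μ : Measure (Euc (2 * d))} (hμ : IsGibbs (fquad d m L) μ)
    {h : ℝ} (hh0 : 0 < h) (hh1 : h < 2 / L)
    {ξ : ℕ → Ω → Euc (2 * d)} (hξmeas : ∀ k, Measurable (ξ k))
    (hξlaw : ∀ k, P.map (ξ k) = stdGaussian (2 * d))
    (hindep : iIndepFun ξ P)
    {Xb : ℕ → Ω → Euc (2 * d)} (hXb0 : Xb 0 = fun _ => WithLp.toLp 2 fun _ : Fin (2 * d) => (1 : ℝ))
    (hXb : ∀ k : ℕ, Xb (k + 1) = fun ω =>
      Xb k ω - h • gradient (fquad d m L) (Xb k ω) + Real.sqrt (2 * h) • ξ (k + 1) ω)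
    (k : ℕ) (hk : 1 ≤ k) :
    (W2 (P.map (Xb k)) μ) ^ 2 =
      d * (1 - m * h) ^ (2 * k) +
        d / m * (Real.sqrt (2 / (2 - m * h)) * Real.sqrt (1 - (1 - m * h) ^ (2 * k)) - 1) ^ 2 +
      d * (1 - L * h) ^ (2 * k) +
        d / L * (Real.sqrt (2 / (2 - L * h)) * Real.sqrt (1 - (1 - L * h) ^ (2 * k)) - 1) ^ 2 := by
  have hL : 0 < L := hm.trans_le hmL
  have hLh : L * h < 2 := (lt_div_iff₀' hL).1 hh1
  have hmh : m * h < 2 := (mul_le_mul_of_nonneg_right hmL hh0.le).trans_lt hLh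
  rw [lmc_quadratic_w2_formula_general (fun i => by split_ifs <;> assumption) hμ hh0.le
      (fun i => by split_ifs <;> assumption) hξmeas hξlaw hindep hXb0 hXb k]
  simp only [one_pow, mul_one]
  rw [sum_comp_ite_val_lt (by lia) fun a => (1 - a * h) ^ (2 * k) +
    1 / a * (√(2 / (2 - a * h)) * √(1 - (1 - a * h) ^ (2 * k)) - 1) ^ 2, two_mul d,
    Nat.add_sub_cancel]
  simp only [nsmul_eq_mul]
  ring

end
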